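/- arXiv:2405.09966 — 4 statements merged into one kernel-verified Lean document; each statement's English description precedes it below -/
import Mathlib

section
/- Let a, b, c > 0, ω ∈ ℝ, and s > 0 with s^a > |ω|. Then ∫_0^∞ e^{−s y} y^{b−1} M_{a,b}^c(−ω y^a) dy = s^{a c − b} / (s^a + ω)^c; equivalently, the Laplace transform of y ↦ y^{b−1} M_{a,b}^c(−ω y^a) at s is s^{a c − b}/(s^a + ω)^c. -/
open MeasureTheory

/-- The generalized (three-parameter) Mittag-Leffler function
`M_{a,b}^c(z) = Σ_{n=0}^∞ (c)_n z^n / (n! Γ(a n + b))`,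
where `(c)_n = c(c+1)⋯(c+n−1)` is the Pochhammer symbol. -/
noncomputable def genML (a b c z : ℝ) : ℝ :=
  ∑' n : ℕ, (ascPochhammer ℝ n).eval c * z ^ n / (n.factorial * Real.Gamma (a * n + b))

/-!
The Laplace transform of `y ^ (d - 1) / Γ(d)` is `s ^ (-d)`, so transforming the Mittag-Leffler
series term by term removes the Gamma factors and leaves `s ^ (-b)` times the binomial series
`∑ (c)ₙ / n! * x ^ n = (1 - x) ^ (-c)` at `x = -ω / s ^ a`. Since `|x| < 1`, that series converges
absolutely, which is what justifies exchanging sum and integral.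
-/

theorem ascPochhammer_eval_div_factorial {K : Type*} [Field K] [CharZero K] (c : K)
    (n : ℕ) :
    (ascPochhammer K n).eval c / n.factorial = Ring.multichoose c n := by
  rw [div_eq_iff (Nat.cast_ne_zero.mpr n.factorial_ne_zero), mul_comm, ← nsmul_eq_mul,
    Ring.factorial_nsmul_multichoose_eq_ascPochhammer, Polynomial.ascPochhammer_smeval_eq_eval]

theorem hasSum_multichoose_mul_pow (c : ℝ) {x : ℝ} (hx : |x| < 1) :
    HasSum (fun n : ℕ ↦ Ring.multichoose c n * x ^ n) (1 / (1 - x) ^ c) := by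
  have hball : x ∈ Metric.eball (0 : ℝ) 1 := by
    simpa [enorm_eq_nnnorm, ← NNReal.coe_lt_coe] using hx
  have h := (Real.one_div_one_sub_rpow_hasFPowerSeriesOnBall_zero c).hasSum hball
  simpa [Ring.multichoose_eq, mul_comm] using h

section TermwiseLaplace

variable {d s : ℝ}

theorem integrableOn_exp_neg_mul_mul_rpow_div_Gamma (hd : 0 < d) (hs : 0 < s) :
    IntegrableOn (fun y : ℝ ↦ Real.exp (-s * y) * (y ^ (d - 1) / Real.Gamma d)) (Set.Ioi 0) := by
  have h := integrableOn_rpow_mul_exp_neg_mul_rpow (by linarith : -1 < d - 1) one_pos hs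
  refine IntegrableOn.congr_fun (h.div_const (Real.Gamma d)) (fun y _ ↦ ?_) measurableSet_Ioi
  simp only [Real.rpow_one]
  ring

theorem integral_exp_neg_mul_mul_rpow_div_Gamma (hd : 0 < d) (hs : 0 < s) :
    ∫ y in Set.Ioi (0 : ℝ), Real.exp (-s * y) * (y ^ (d - 1) / Real.Gamma d) = (s ^ d)⁻¹ := by
  calc ∫ y in Set.Ioi (0 : ℝ), Real.exp (-s * y) * (y ^ (d - 1) / Real.Gamma d)
      = ∫ y in Set.Ioi (0 : ℝ), y ^ (d - 1) * Real.exp (-(s * y)) / Real.Gamma d := by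
        congr with y
        rw [neg_mul]
        ring
    _ = (1 / s) ^ d := by
        rw [integral_div, Real.integral_rpow_mul_exp_neg_mul_Ioi hd hs,
          mul_div_cancel_right₀ _ (Real.Gamma_pos_of_pos hd).ne']
    _ = (s ^ d)⁻¹ := by rw [one_div, Real.inv_rpow hs.le]

theorem integral_norm_exp_neg_mul_mul_rpow_div_Gamma_smul {E : Type*} [NormedAddCommGroup E]
    [NormedSpace ℝ E] (hd : 0 < d) (hs : 0 < s) (v : E) :
    ∫ y in Set.Ioi (0 : ℝ), ‖(Real.exp (-s * y) * (y ^ (d - 1) / Real.Gamma d)) • v‖ =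
      ‖(s ^ d)⁻¹ • v‖ := by
  rw [norm_smul_of_nonneg (by positivity), ← integral_exp_neg_mul_mul_rpow_div_Gamma hd hs,
    ← integral_mul_const]
  refine setIntegral_congr_fun measurableSet_Ioi fun y (hy : 0 < y) ↦ ?_
  exact norm_smul_of_nonneg (by positivity) v

theorem hasSum_integral_exp_neg_mul_smul_tsum_rpow_div_Gamma_smul {ι E : Type*} [Countable ι]
    [NormedAddCommGroup E] [NormedSpace ℝ E] [CompleteSpace E] {u : ι → E} {d : ι → ℝ}
    (hd : ∀ i, 0 < d i) (hs : 0 < s) (hu : Summable fun i ↦ ‖(s ^ d i)⁻¹ • u i‖) :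
    HasSum (fun i ↦ (s ^ d i)⁻¹ • u i)
      (∫ y in Set.Ioi (0 : ℝ),
        Real.exp (-s * y) • ∑' i, (y ^ (d i - 1) / Real.Gamma (d i)) • u i) := by
  have h := hasSum_integral_of_summable_integral_norm
    (fun i ↦ (integrableOn_exp_neg_mul_mul_rpow_div_Gamma (hd i) hs).smul_const (u i))
    (by simpa only [integral_norm_exp_neg_mul_mul_rpow_div_Gamma_smul (hd _) hs] using hu)
  simp only [integral_smul_const, integral_exp_neg_mul_mul_rpow_div_Gamma (hd _) hs] at h
  simpa only [mul_smul, tsum_const_smul''] using h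

end TermwiseLaplace

theorem rpow_mul_natCast_add {x : ℝ} (hx : 0 < x) (a b : ℝ) (n : ℕ) :
    x ^ (a * n + b) = (x ^ a) ^ n * x ^ b := by
  rw [Real.rpow_add hx, Real.rpow_mul_natCast hx.le]

theorem rpow_mul_genML_mul_rpow (a b c z : ℝ) {y : ℝ} (hy : 0 < y) :
    y ^ (b - 1) * genML a b c (z * y ^ a) =
      ∑' n : ℕ, y ^ (a * n + b - 1) / Real.Gamma (a * n + b) * (Ring.multichoose c n * z ^ n) := by
  rw [genML, ← tsum_mul_left]
  refine tsum_congr fun n ↦ ?_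
  rw [← ascPochhammer_eval_div_factorial, add_sub_assoc, rpow_mul_natCast_add hy, mul_pow]
  ring

theorem rpow_neg_mul_one_div_one_sub_neg_div_rpow {s ω a : ℝ} (b c : ℝ) (hs : 0 < s)
    (hω : 0 ≤ s ^ a + ω) :
    s ^ (-b) * (1 / (1 - -ω / s ^ a) ^ c) = s ^ (a * c - b) / (s ^ a + ω) ^ c := by
  have hsa : 0 < s ^ a := Real.rpow_pos_of_pos hs a
  have hbase : 1 - -ω / s ^ a = (s ^ a + ω) / s ^ a := by
    field_simp
    ring
  rw [hbase, Real.div_rpow hω hsa.le, one_div_div, ← Real.rpow_mul hs.le, sub_eq_neg_add,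
    Real.rpow_add hs, mul_div_assoc]

theorem laplace_transform_genML_general {a b ω s : ℝ} (c : ℝ) (ha : 0 ≤ a) (hb : 0 < b)
    (hs : 0 < s) (hsa : |ω| < s ^ a) :
    ∫ y in Set.Ioi (0 : ℝ),
        Real.exp (-s * y) * (y ^ (b - 1) * genML a b c (-ω * y ^ a)) =
      s ^ (a * c - b) / (s ^ a + ω) ^ c := by
  have hx : |-ω / s ^ a| < 1 := by
    rwa [abs_div, abs_neg, Real.abs_rpow_of_nonneg hs.le, abs_of_pos hs,
      div_lt_one (Real.rpow_pos_of_pos hs a)]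
  have hterm (n : ℕ) : (s ^ (a * n + b))⁻¹ • (Ring.multichoose c n * (-ω) ^ n) =
      s ^ (-b) * (Ring.multichoose c n * (-ω / s ^ a) ^ n) := by
    rw [smul_eq_mul, rpow_mul_natCast_add hs, Real.rpow_neg hs.le, div_pow]
    ring
  have hbinom := (hasSum_multichoose_mul_pow c hx).mul_left (s ^ (-b))
  simp only [← hterm] at hbinom
  have hlaplace := hasSum_integral_exp_neg_mul_smul_tsum_rpow_div_Gamma_smul
    (fun n : ℕ ↦ (by positivity : 0 < a * n + b)) hs hbinom.summable.norm
  calc ∫ y in Set.Ioi (0 : ℝ), Real.exp (-s * y) * (y ^ (b - 1) * genML a b c (-ω * y ^ a))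
      = ∫ y in Set.Ioi (0 : ℝ), Real.exp (-s * y) • ∑' n : ℕ,
          (y ^ (a * n + b - 1) / Real.Gamma (a * n + b)) • (Ring.multichoose c n * (-ω) ^ n) :=
        setIntegral_congr_fun measurableSet_Ioi fun y hy ↦ by
          simp only [rpow_mul_genML_mul_rpow a b c (-ω) hy, smul_eq_mul]
    _ = s ^ (-b) * (1 / (1 - -ω / s ^ a) ^ c) := hlaplace.unique hbinom
    _ = s ^ (a * c - b) / (s ^ a + ω) ^ c :=
        rpow_neg_mul_one_div_one_sub_neg_div_rpow b c hs (by linarith [neg_abs_le ω])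

/-- For `a, b, c > 0`, `ω ∈ ℝ` and `s > 0` with `s^a > |ω|`, the Laplace
transform of `y ↦ y^{b−1} M_{a,b}^c(−ω y^a)` at `s` equals `s^{ac−b}/(s^a + ω)^c`. -/
theorem laplace_transform_genML
    (a b c ω s : ℝ) (ha : 0 < a) (hb : 0 < b) (hc : 0 < c) (hs : 0 < s)
    (hsa : |ω| < s ^ a) :
    ∫ y in Set.Ioi (0 : ℝ),
        Real.exp (-s * y) * (y ^ (b - 1) * genML a b c (-ω * y ^ a)) =
      s ^ (a * c - b) / (s ^ a + ω) ^ c :=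
  laplace_transform_genML_general c ha.le hb hs hsa
end

section
/- Let e, d, k > 0, w ∈ ℝ and t > 0. Then ∫_0^t y^{d−1} M_{e,d}^k(w y^e) (t−y)^{k−1} dy = Γ(k) · t^{d+k−1} · M_{e,d+k}^k(w t^e). -/
open MeasureTheory intervalIntegral

/-!
Multiplied by `y ^ (d - 1)`, the Mittag-Leffler series in `w y ^ e` becomes a series of powers
`y ^ (e n + d - 1)`, which is integrated against `(t - y) ^ (k - 1)` term by term. The `n`-th
integral is a Beta integral, whose factor `Γ(e n + d) / Γ(e n + d + k)` shifts the second parameter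
of the `n`-th coefficient from `d` to `d + k`; this does not involve the Pochhammer symbol, so its
parameter need not be `k`. The interchange is justified because every integrand has constant sign,
so that the `L¹` norms are the absolute values of the terms of the resulting series, and this
converges absolutely because `1 / Γ` decays faster than any exponential.
-/

open Asymptotics Filter Set
open ProbabilityTheory (beta beta_pos beta_eq_betaIntegralReal)

section BetaIntegral

variable {t u v : ℝ}

theorem integral_rpow_mul_sub_rpow (ht : 0 < t) (hu : 0 < u) (hv : 0 < v) :
    ∫ y in (0 : ℝ)..t, y ^ (u - 1) * (t - y) ^ (v - 1) = t ^ (u + v - 1) * beta u v := by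
  have hcomplex := congrArg Complex.re (Complex.betaIntegral_scaled (u : ℂ) (v : ℂ) ht)
  have hcast : ∫ y in (0 : ℝ)..t, (y : ℂ) ^ ((u : ℂ) - 1) * ((t : ℂ) - y) ^ ((v : ℂ) - 1) =
      ∫ y in (0 : ℝ)..t, ((y ^ (u - 1) * (t - y) ^ (v - 1) : ℝ) : ℂ) := by
    refine intervalIntegral.integral_congr fun y hy ↦ ?_
    rw [uIcc_of_le ht.le] at hy
    simp [Complex.ofReal_cpow hy.1, Complex.ofReal_cpow (sub_nonneg.2 hy.2)]
  have hpow : (t : ℂ) ^ ((u : ℂ) + v - 1) = ((t ^ (u + v - 1) : ℝ) : ℂ) := by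
    simp [Complex.ofReal_cpow ht.le]
  rwa [hcast, intervalIntegral.integral_ofReal, Complex.ofReal_re, hpow, Complex.re_ofReal_mul,
    ← beta_eq_betaIntegralReal u v hu hv] at hcomplex

theorem intervalIntegrable_rpow_mul_sub_rpow (ht : 0 < t) (hu : 0 < u) (hv : 0 < v) :
    IntervalIntegrable (fun y ↦ y ^ (u - 1) * (t - y) ^ (v - 1)) volume 0 t := by
  -- The Bochner integral of a non-integrable function is `0`, whereas this one is positive.
  refine intervalIntegrable_of_integral_ne_zero ?_
  rw [integral_rpow_mul_sub_rpow ht hu hv]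
  exact (mul_pos (Real.rpow_pos_of_pos ht _) (beta_pos hu hv)).ne'

theorem integral_norm_mul_rpow_mul_sub_rpow (a : ℝ) (ht : 0 < t) (hu : 0 < u) (hv : 0 < v) :
    ∫ y in Ioc 0 t, ‖a * (y ^ (u - 1) * (t - y) ^ (v - 1))‖ =
      ‖a * (t ^ (u + v - 1) * beta u v)‖ := by
  have hnonneg : ∀ y ∈ Ioc 0 t, 0 ≤ y ^ (u - 1) * (t - y) ^ (v - 1) := fun y hy ↦
    mul_nonneg (Real.rpow_nonneg hy.1.le _) (Real.rpow_nonneg (sub_nonneg.2 hy.2) _)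
  calc ∫ y in Ioc 0 t, ‖a * (y ^ (u - 1) * (t - y) ^ (v - 1))‖
      = ∫ y in Ioc 0 t, ‖a‖ * (y ^ (u - 1) * (t - y) ^ (v - 1)) :=
        setIntegral_congr_fun measurableSet_Ioc fun y hy ↦ by
          simp only [norm_mul a, Real.norm_of_nonneg (hnonneg y hy)]
    _ = ‖a‖ * (t ^ (u + v - 1) * beta u v) := by
        rw [MeasureTheory.integral_const_mul, ← integral_of_le ht.le,
          integral_rpow_mul_sub_rpow ht hu hv]
    _ = ‖a * (t ^ (u + v - 1) * beta u v)‖ := by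
        rw [norm_mul a, Real.norm_of_nonneg
          (mul_nonneg (Real.rpow_nonneg ht.le _) (beta_pos hu hv).le)]

theorem integral_tsum_mul_rpow_mul_sub_rpow {ι : Type*} [Countable ι] {a p : ι → ℝ}
    (ht : 0 < t) (hp : ∀ i, 0 < p i) (hv : 0 < v)
    (ha : Summable fun i ↦ a i * (t ^ (p i + v - 1) * beta (p i) v)) :
    ∫ y in (0 : ℝ)..t, (∑' i, a i * y ^ (p i - 1)) * (t - y) ^ (v - 1) =
      ∑' i, a i * (t ^ (p i + v - 1) * beta (p i) v) := by
  have hint : ∀ i, IntegrableOn (fun y ↦ a i * (y ^ (p i - 1) * (t - y) ^ (v - 1))) (Ioc 0 t) :=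
    fun i ↦ (intervalIntegrable_rpow_mul_sub_rpow ht (hp i) hv).1.const_mul _
  have hsum : Summable fun i ↦
      ∫ y in Ioc 0 t, ‖a i * (y ^ (p i - 1) * (t - y) ^ (v - 1))‖ := by
    simpa only [integral_norm_mul_rpow_mul_sub_rpow _ ht (hp _) hv] using ha.norm
  simp_rw [← tsum_mul_right, mul_assoc, integral_of_le ht.le]
  rw [← integral_tsum_of_summable_integral_norm hint hsum]
  refine tsum_congr fun i ↦ ?_
  rw [MeasureTheory.integral_const_mul, ← integral_of_le ht.le,
    integral_rpow_mul_sub_rpow ht (hp i) hv]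

end BetaIntegral

section GammaGrowth

theorem rpow_mul_exp_neg_le_Gamma_add_one {x r : ℝ} (hx : 0 ≤ x) (hr : 0 ≤ r) :
    r ^ x * Real.exp (-r) ≤ Real.Gamma (x + 1) := by
  have hint : IntegrableOn (fun s ↦ Real.exp (-s) * s ^ x) (Ioi 0) := by
    simpa using Real.GammaIntegral_convergent (show 0 < x + 1 by positivity)
  calc r ^ x * Real.exp (-r)
      = ∫ s in Ioi r, r ^ x * Real.exp (-s) := by
        rw [MeasureTheory.integral_const_mul, integral_exp_neg_Ioi]
    _ ≤ ∫ s in Ioi r, Real.exp (-s) * s ^ x := by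
        refine setIntegral_mono_on ((integrableOn_exp_neg_Ioi r).const_mul _)
          (hint.mono_set (Ioi_subset_Ioi hr)) measurableSet_Ioi fun s hs ↦ ?_
        rw [mul_comm]
        gcongr
        exact le_of_lt hs
    _ ≤ ∫ s in Ioi 0, Real.exp (-s) * s ^ x :=
        setIntegral_mono_set hint
          (ae_restrict_of_forall_mem measurableSet_Ioi fun s hs ↦
            mul_nonneg (Real.exp_nonneg _) (Real.rpow_nonneg (le_of_lt hs) _))
          (Ioi_subset_Ioi hr).eventuallyLE
    _ = Real.Gamma (x + 1) := by
        rw [Real.Gamma_eq_integral (by positivity), add_sub_cancel_right]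

theorem inv_Gamma_isBigO_rpow {q : ℝ} (hq : 0 < q) :
    (fun x ↦ (Real.Gamma x)⁻¹) =O[atTop] fun x ↦ q ^ x := by
  refine IsBigO.of_bound (q⁻¹ * Real.exp q⁻¹) ?_
  filter_upwards [eventually_ge_atTop 1] with x hx
  have hGamma : q⁻¹ ^ (x - 1) * Real.exp (-q⁻¹) ≤ Real.Gamma x := by
    simpa using rpow_mul_exp_neg_le_Gamma_add_one (sub_nonneg.2 hx) (inv_nonneg.2 hq.le)
  rw [Real.norm_of_nonneg (inv_nonneg.2 (Real.Gamma_nonneg_of_nonneg (by positivity))),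
    Real.norm_of_nonneg (Real.rpow_nonneg hq.le x)]
  calc (Real.Gamma x)⁻¹
      ≤ (q⁻¹ ^ (x - 1) * Real.exp (-q⁻¹))⁻¹ := by gcongr
    _ = q⁻¹ * Real.exp q⁻¹ * q ^ x := by
        rw [Real.inv_rpow hq.le, mul_inv, inv_inv, Real.exp_neg, inv_inv, Real.rpow_sub_one hq.ne']
        ring

theorem inv_Gamma_mul_natCast_add_isBigO_pow {a q : ℝ} (ha : 0 < a) (b : ℝ) (hq : 0 < q) :
    (fun n : ℕ ↦ (Real.Gamma (a * n + b))⁻¹) =O[atTop] fun n ↦ q ^ n := by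
  have htop : Tendsto (fun n : ℕ ↦ a * n + b) atTop atTop :=
    tendsto_atTop_add_const_right _ _ (tendsto_natCast_atTop_atTop.const_mul_atTop ha)
  have hroot : 0 < q ^ a⁻¹ := Real.rpow_pos_of_pos hq _
  have hpow : ∀ n : ℕ, (q ^ a⁻¹) ^ (a * n + b) = (q ^ a⁻¹) ^ b * q ^ n := fun n ↦ by
    rw [Real.rpow_add hroot, Real.rpow_mul hroot.le, Real.rpow_inv_rpow hq.le ha.ne',
      Real.rpow_natCast, mul_comm]
  refine ((inv_Gamma_isBigO_rpow hroot).comp_tendsto htop).trans ?_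
  simp only [Function.comp_def, hpow]
  exact isBigO_const_mul_self _ _ _

theorem summable_div_Gamma_of_isBigO_pow {f : ℕ → ℝ} {a r : ℝ}
    (hf : f =O[atTop] fun n ↦ r ^ n) (ha : 0 < a) (b : ℝ) :
    Summable fun n : ℕ ↦ f n / Real.Gamma (a * n + b) := by
  have hq : 0 < (|r| + 1)⁻¹ := by positivity
  have hlt : |r * (|r| + 1)⁻¹| < 1 := by
    rw [abs_mul, abs_of_pos hq, ← div_eq_mul_inv, div_lt_one (by positivity)]
    exact lt_add_one _
  refine summable_of_isBigO_nat (summable_geometric_of_abs_lt_one hlt) ?_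
  simpa only [div_eq_mul_inv, mul_pow] using
    hf.mul (inv_Gamma_mul_natCast_add_isBigO_pow ha b hq)

end GammaGrowth

theorem norm_ascPochhammer_eval_le {R : Type*} [SeminormedRing R] [NormOneClass R] (c : R)
    (n : ℕ) : ‖(ascPochhammer R n).eval c‖ ≤ (‖c‖ + 1) ^ n * n.factorial := by
  induction n with
  | zero => simp
  | succ n ih =>
    have hfactor : ‖c + n‖ ≤ (‖c‖ + 1) * (n + 1) :=
      calc ‖c + n‖ ≤ ‖c‖ + n := (norm_add_le _ _).trans <| by
            simpa using Nat.norm_cast_le (α := R) n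
        _ ≤ (‖c‖ + 1) * (n + 1) := by nlinarith [mul_nonneg (norm_nonneg c) n.cast_nonneg]
    calc ‖(ascPochhammer R (n + 1)).eval c‖
        ≤ ‖(ascPochhammer R n).eval c‖ * ‖c + n‖ := by
          rw [ascPochhammer_succ_eval]
          exact norm_mul_le _ _
      _ ≤ (‖c‖ + 1) ^ n * n.factorial * ((‖c‖ + 1) * (n + 1)) := by gcongr
      _ = (‖c‖ + 1) ^ (n + 1) * (n + 1).factorial := by
          rw [Nat.factorial_succ]
          push_cast
          ring

/-- The `n`-th term of the series defining the generalized Mittag-Leffler function `genML`. -/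
noncomputable def genMLTerm (a b c z : ℝ) (n : ℕ) : ℝ :=
  (ascPochhammer ℝ n).eval c * z ^ n / (n.factorial * Real.Gamma (a * n + b))

theorem genML_eq_tsum (a b c z : ℝ) : genML a b c z = ∑' n, genMLTerm a b c z n := rfl

theorem summable_genMLTerm {a : ℝ} (ha : 0 < a) (b c z : ℝ) : Summable (genMLTerm a b c z) := by
  have hcoeff : (fun n : ℕ ↦ (ascPochhammer ℝ n).eval c * z ^ n / n.factorial) =O[atTop]
      fun n ↦ ((‖c‖ + 1) * ‖z‖) ^ n := by
    refine IsBigO.of_norm_le fun n ↦ ?_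
    rw [norm_div, norm_mul, norm_pow, Real.norm_natCast, div_le_iff₀ (by positivity), mul_pow,
      mul_right_comm]
    gcongr
    exact norm_ascPochhammer_eval_le c n
  exact (summable_div_Gamma_of_isBigO_pow hcoeff ha b).congr fun n ↦ div_div _ _ _

theorem rpow_mul_genMLTerm {y : ℝ} (hy : 0 < y) (a b c w : ℝ) (n : ℕ) :
    y ^ (b - 1) * genMLTerm a b c (w * y ^ a) n =
      genMLTerm a b c w n * y ^ (a * n + b - 1) := by
  rw [add_sub_assoc, Real.rpow_add hy, Real.rpow_mul hy.le, Real.rpow_natCast]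
  simp only [genMLTerm, mul_pow]
  ring

theorem genMLTerm_mul_beta {a b : ℝ} {n : ℕ} (hn : 0 < a * n + b) (v c z : ℝ) :
    genMLTerm a b c z n * beta (a * n + b) v = Real.Gamma v * genMLTerm a (b + v) c z n := by
  have hGamma : Real.Gamma (a * n + b) ≠ 0 := (Real.Gamma_pos_of_pos hn).ne'
  simp only [genMLTerm, beta, ← add_assoc]
  field_simp

theorem genML_convolution_integral_general
    (e d k c w t : ℝ) (he : 0 < e) (hd : 0 < d) (hk : 0 < k) (ht : 0 < t) :
    ∫ y in (0 : ℝ)..t, y ^ (d - 1) * genML e d c (w * y ^ e) * (t - y) ^ (k - 1) =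
      Real.Gamma k * t ^ (d + k - 1) * genML e (d + k) c (w * t ^ e) := by
  have hexponent : ∀ n : ℕ, 0 < e * n + d := fun n ↦ by positivity
  have hterm : ∀ n : ℕ,
      genMLTerm e d c w n * (t ^ (e * n + d + k - 1) * beta (e * n + d) k) =
        Real.Gamma k * t ^ (d + k - 1) * genMLTerm e (d + k) c (w * t ^ e) n := fun n ↦ by
    rw [mul_left_comm, genMLTerm_mul_beta (hexponent n), mul_assoc, rpow_mul_genMLTerm ht,
      add_assoc]
    ring
  have hsum : Summable fun n : ℕ ↦
      genMLTerm e d c w n * (t ^ (e * n + d + k - 1) * beta (e * n + d) k) := by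
    simpa only [hterm] using (summable_genMLTerm he (d + k) c (w * t ^ e)).mul_left _
  calc ∫ y in (0 : ℝ)..t, y ^ (d - 1) * genML e d c (w * y ^ e) * (t - y) ^ (k - 1)
      = ∫ y in (0 : ℝ)..t,
          (∑' n : ℕ, genMLTerm e d c w n * y ^ (e * n + d - 1)) * (t - y) ^ (k - 1) := by
        simp only [integral_of_le ht.le]
        refine setIntegral_congr_fun measurableSet_Ioc fun y hy ↦ ?_
        simp only [genML_eq_tsum, ← tsum_mul_left, rpow_mul_genMLTerm hy.1]
    _ = ∑' n : ℕ, genMLTerm e d c w n * (t ^ (e * n + d + k - 1) * beta (e * n + d) k) :=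
        integral_tsum_mul_rpow_mul_sub_rpow ht hexponent hk hsum
    _ = Real.Gamma k * t ^ (d + k - 1) * genML e (d + k) c (w * t ^ e) := by
        simp only [hterm, tsum_mul_left, genML_eq_tsum]

/-- For `e, d, k > 0`, `w ∈ ℝ` and `t > 0`,
`∫_0^t y^{d−1} M_{e,d}^k(w y^e) (t−y)^{k−1} dy = Γ(k) t^{d+k−1} M_{e,d+k}^k(w t^e)`. -/
theorem genML_convolution_integral
    (e d k w t : ℝ) (he : 0 < e) (hd : 0 < d) (hk : 0 < k) (ht : 0 < t) :
    ∫ y in (0 : ℝ)..t, y ^ (d - 1) * genML e d k (w * y ^ e) * (t - y) ^ (k - 1) =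
      Real.Gamma k * t ^ (d + k - 1) * genML e (d + k) k (w * t ^ e) :=
  genML_convolution_integral_general e d k k w t he hd hk ht
end

section
/- Let β ∈ (0,1), ν > 0, γ > 0, and let s > 0 satisfy (s+ν)^β > |ν^β − γ|. Then ∫_0^∞ e^{−s y} e^{−ν y} y^{β−1} M_{β,β}((ν^β − γ) y^β) dy = 1 / ((s+ν)^β − ν^β + γ); i.e. the Laplace transform of y ↦ e^{−ν y} y^{β−1} M_{β,β}((ν^β − γ) y^β) at s equals 1/((s+ν)^β − ν^β + γ). -/
open MeasureTheory

/-- The two-parameter Mittag-Leffler function `M_{a,b}(z) = Σ_{n=0}^∞ z^n / Γ(a n + b)`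
(the three-parameter function `M_{a,b}^c` with `c = 1`). -/
noncomputable def ML (a b z : ℝ) : ℝ :=
  ∑' n : ℕ, z ^ n / Real.Gamma (a * n + b)

/-! In the Laplace transform of `y ^ (b - 1) * M_{a,b}(c * y ^ a)` at `p`, the series can be
integrated term by term. Each term is a Gamma integral whose value cancels the coefficient
`1 / Γ(a n + b)`, so a geometric series of ratio `c / p ^ a` remains. Tempering by `exp (-ν y)`
replaces `p = s` by `p = s + ν`. -/

section LaplaceTransform

open Real Set

variable {a b c p : ℝ}

theorem integrableOn_rpow_mul_exp_neg_mul_Ioi {q : ℝ} (hq : 0 < q) (hp : 0 < p) :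
    IntegrableOn (fun y ↦ y ^ (q - 1) * exp (-(p * y))) (Ioi 0) := by
  simpa using integrableOn_rpow_mul_exp_neg_mul_rpow (s := q - 1) (by linarith) one_pos hp

theorem hasSum_integral_rpow_mul_exp_neg_mul_Ioi {ι : Type*} [Countable ι] {q u : ι → ℝ}
    (hq : ∀ i, 0 < q i) (hp : 0 < p)
    (hsum : Summable fun i ↦ u i * ((1 / p) ^ q i * Gamma (q i))) :
    HasSum (fun i ↦ u i * ((1 / p) ^ q i * Gamma (q i)))
      (∫ y in Ioi 0, ∑' i, u i * (y ^ (q i - 1) * exp (-(p * y)))) := by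
  have integral_term (i : ι) (v : ℝ) :
      ∫ y in Ioi 0, v * (y ^ (q i - 1) * exp (-(p * y))) = v * ((1 / p) ^ q i * Gamma (q i)) := by
    rw [integral_const_mul, integral_rpow_mul_exp_neg_mul_Ioi (hq i) hp]
  have integral_norm_term (i : ι) :
      ∫ y in Ioi 0, ‖u i * (y ^ (q i - 1) * exp (-(p * y)))‖ =
        ‖u i * ((1 / p) ^ q i * Gamma (q i))‖ := by
    have hGamma : 0 < (1 / p) ^ q i * Gamma (q i) :=
      mul_pos (rpow_pos_of_pos (one_div_pos.2 hp) _) (Gamma_pos_of_pos (hq i))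
    rw [norm_mul, norm_of_nonneg hGamma.le, ← integral_term]
    refine setIntegral_congr_fun measurableSet_Ioi fun y (hy : 0 < y) ↦ ?_
    have hterm : 0 ≤ y ^ (q i - 1) * exp (-(p * y)) := by positivity
    simp only [norm_mul (u i), norm_of_nonneg hterm]
  have hsum_norm : Summable fun i ↦ ∫ y in Ioi 0, ‖u i * (y ^ (q i - 1) * exp (-(p * y)))‖ := by
    simpa only [integral_norm_term] using hsum.norm
  simpa only [integral_term] using hasSum_integral_of_summable_integral_norm
    (fun i ↦ (integrableOn_rpow_mul_exp_neg_mul_Ioi (hq i) hp).const_mul (u i)) hsum_norm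

theorem exp_neg_mul_rpow_mul_ML_eq_tsum {y : ℝ} (hy : 0 < y) :
    exp (-(p * y)) * (y ^ (b - 1) * ML a b (c * y ^ a)) =
      ∑' n : ℕ, c ^ n / Gamma (a * n + b) * (y ^ (a * n + b - 1) * exp (-(p * y))) := by
  rw [ML, ← tsum_mul_left, ← tsum_mul_left]
  refine tsum_congr fun n ↦ ?_
  have hpow : y ^ (a * n + b - 1) = (y ^ a) ^ n * y ^ (b - 1) := by
    rw [add_sub_assoc, rpow_add hy, rpow_mul_natCast hy.le]
  rw [hpow, mul_pow]
  ring

theorem ML_coeff_mul_one_div_rpow_mul_Gamma {n : ℕ} (hGamma : Gamma (a * n + b) ≠ 0)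
    (hp : 0 < p) :
    c ^ n / Gamma (a * n + b) * ((1 / p) ^ (a * n + b) * Gamma (a * n + b)) =
      p ^ (-b) * (c / p ^ a) ^ n := by
  have hpow : (1 / p) ^ (a * n + b) = p ^ (-b) * ((p ^ a) ^ n)⁻¹ := by
    rw [one_div, inv_rpow hp.le, rpow_add hp, rpow_mul_natCast hp.le, rpow_neg hp.le, mul_inv_rev]
  rw [hpow, div_pow]
  field_simp

theorem integral_exp_neg_mul_rpow_mul_ML (ha : 0 < a) (hb : 0 < b) (hp : 0 < p)
    (hc : |c| < p ^ a) :
    ∫ y in Ioi 0, exp (-(p * y)) * (y ^ (b - 1) * ML a b (c * y ^ a)) =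
      p ^ (a - b) / (p ^ a - c) := by
  have hq (n : ℕ) : 0 < a * n + b := by positivity
  have hpa : 0 < p ^ a := rpow_pos_of_pos hp a
  have hratio : |c / p ^ a| < 1 := by
    rwa [abs_div, abs_of_pos hpa, div_lt_one hpa]
  have hgeom : HasSum
      (fun n : ℕ ↦ c ^ n / Gamma (a * n + b) * ((1 / p) ^ (a * n + b) * Gamma (a * n + b)))
      (p ^ (-b) * (1 - c / p ^ a)⁻¹) := by
    simpa only [ML_coeff_mul_one_div_rpow_mul_Gamma (Gamma_pos_of_pos (hq _)).ne' hp] using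
      (hasSum_geometric_of_abs_lt_one hratio).mul_left (p ^ (-b))
  calc ∫ y in Ioi 0, exp (-(p * y)) * (y ^ (b - 1) * ML a b (c * y ^ a))
    _ = ∫ y in Ioi 0, ∑' n : ℕ,
          c ^ n / Gamma (a * n + b) * (y ^ (a * n + b - 1) * exp (-(p * y))) :=
      setIntegral_congr_fun measurableSet_Ioi fun _ hy ↦ exp_neg_mul_rpow_mul_ML_eq_tsum hy
    _ = p ^ (-b) * (1 - c / p ^ a)⁻¹ :=
      (hasSum_integral_rpow_mul_exp_neg_mul_Ioi hq hp hgeom.summable).unique hgeom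
    _ = p ^ (a - b) / (p ^ a - c) := by
      rw [one_sub_div hpa.ne', inv_div, sub_eq_neg_add a b, rpow_add hp, mul_div_assoc]

theorem laplace_transform_tempered_ML_general {ν s : ℝ} (ha : 0 < a) (hb : 0 < b)
    (hsν : 0 < s + ν) (hc : |c| < (s + ν) ^ a) :
    ∫ y in Ioi 0, exp (-s * y) * (exp (-ν * y) * y ^ (b - 1) * ML a b (c * y ^ a)) =
      (s + ν) ^ (a - b) / ((s + ν) ^ a - c) := by
  have hexp (y : ℝ) : exp (-s * y) * exp (-ν * y) = exp (-((s + ν) * y)) := by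
    rw [← exp_add]
    ring_nf
  rw [← integral_exp_neg_mul_rpow_mul_ML ha hb hsν hc]
  simp only [← hexp, mul_assoc]

end LaplaceTransform

/-- For `β ∈ (0,1)`, `ν > 0`, `γ > 0` and `s > 0` with
`(s+ν)^β > |ν^β − γ|`, the Laplace transform of
`y ↦ e^{−ν y} y^{β−1} M_{β,β}((ν^β − γ) y^β)` at `s` equals `1/((s+ν)^β − ν^β + γ)`. -/
theorem laplace_transform_tempered_ML
    (β ν γ s : ℝ) (hβ : β ∈ Set.Ioo (0 : ℝ) 1) (hν : 0 < ν) (hγ : 0 < γ) (hs : 0 < s)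
    (hdom : |ν ^ β - γ| < (s + ν) ^ β) :
    ∫ y in Set.Ioi (0 : ℝ),
        Real.exp (-s * y) *
          (Real.exp (-ν * y) * y ^ (β - 1) * ML β β ((ν ^ β - γ) * y ^ β)) =
      1 / ((s + ν) ^ β - ν ^ β + γ) := by
  simpa [sub_add] using
    laplace_transform_tempered_ML_general hβ.1 hβ.1 (add_pos hs hν) hdom
end

section
/- Let β ∈ (0,1), ν > 0, γ > 0, and set f(s) = (s+ν)^β − ν^β. For every s > 0 with (s+ν)^β > |ν^β − γ|, the function Φ_γ(t) = 1 − γ e^{−νt} Σ_{m=0}^∞ ν^m t^{β+m} M_{β, β+m+1}((ν^β − γ) t^β) satisfies ∫_0^∞ e^{−s t} Φ_γ(t) dt = f(s) / ( s (γ + f(s)) ). -/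
/-!
Expanding the Mittag-Leffler function and integrating the power series term by term, the Gamma
factors cancel against `∫_0^∞ e^{-st} t^{an+b-1} dt = Γ(an+b) s^{-(an+b)}`, so the geometric series
in `c / s^a` gives the Laplace transform `s^{a-b} / (s^a - c)` of `t^{b-1} M_{a,b}(c t^a)`.
Summing over `m` in `Φ_γ` is then a second geometric series, with ratio `ν / s`, and the factor
`e^{-νt}` shifts `s` to `s + ν`. Both interchanges of sum and integral are dominated by the same
series with `|c|` and `|ν|` in place of `c` and `ν`.
-/

open MeasureTheory

/-- `Φ_γ(t) = 1 − γ e^{−νt} Σ_{m=0}^∞ ν^m t^{β+m} M_{β, β+m+1}((ν^β − γ) t^β)`. -/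
noncomputable def Phi (β ν γ t : ℝ) : ℝ :=
  1 - γ * Real.exp (-ν * t) *
      ∑' m : ℕ, ν ^ m * t ^ (β + (m : ℝ)) * ML β (β + m + 1) ((ν ^ β - γ) * t ^ β)

theorem integrable_tsum_of_summable_integral_norm {α ι E : Type*} [MeasurableSpace α]
    {μ : Measure α} [Countable ι] [NormedAddCommGroup E] [CompleteSpace E] {F : ι → α → E}
    (hF_int : ∀ i, Integrable (F i) μ) (hF_sum : Summable fun i ↦ ∫ a, ‖F i a‖ ∂μ) :
    Integrable (fun a ↦ ∑' i, F i a) μ := by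
  have hL1 : ∑' i, ‖(hF_int i).toL1 (F i)‖ₑ ≠ ⊤ :=
    tsum_enorm_ne_top_iff_summable_norm.2 <| by
      simpa only [L1.norm_of_fun_eq_integral_norm] using hF_sum
  refine (L1.integrable_coeFn (∑' i, (hF_int i).toL1 (F i))).congr ?_
  filter_upwards [Lp.hasSum_coeFn_tsum hL1, ae_all_iff.2 fun i ↦ (hF_int i).coeFn_toL1]
    with a ha hcoe
  simp only [← ha.tsum_eq, hcoe]

/-- The function `f` has Laplace transform `F` at the real point `s`: the integral
`∫_0^∞ e^{-st} f(t) dt` converges absolutely and equals `F`. -/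
def HasLaplaceTransform (f : ℝ → ℝ) (s F : ℝ) : Prop :=
  IntegrableOn (fun t ↦ Real.exp (-s * t) * f t) (Set.Ioi 0) ∧
    ∫ t in Set.Ioi (0 : ℝ), Real.exp (-s * t) * f t = F

namespace HasLaplaceTransform

variable {f g : ℝ → ℝ} {s F G : ℝ}

theorem congr (hf : HasLaplaceTransform f s F) (hfg : Set.EqOn f g (Set.Ioi 0)) :
    HasLaplaceTransform g s F := by
  have h : Set.EqOn (fun t ↦ Real.exp (-s * t) * f t) (fun t ↦ Real.exp (-s * t) * g t)
      (Set.Ioi 0) := fun t ht ↦ by simp only [hfg ht]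
  exact ⟨hf.1.congr_fun h measurableSet_Ioi,
    (setIntegral_congr_fun measurableSet_Ioi h).symm.trans hf.2⟩

theorem sub (hf : HasLaplaceTransform f s F) (hg : HasLaplaceTransform g s G) :
    HasLaplaceTransform (fun t ↦ f t - g t) s (F - G) := by
  simp only [HasLaplaceTransform, mul_sub]
  exact ⟨hf.1.sub hg.1, by rw [integral_sub hf.1 hg.1, hf.2, hg.2]⟩

theorem const_mul (hf : HasLaplaceTransform f s F) (r : ℝ) :
    HasLaplaceTransform (fun t ↦ r * f t) s (r * F) := by
  simp only [HasLaplaceTransform, mul_left_comm _ r]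
  exact ⟨hf.1.const_mul r, by rw [integral_const_mul, hf.2]⟩

theorem exp_neg_mul {ν : ℝ} (hf : HasLaplaceTransform f (s + ν) F) :
    HasLaplaceTransform (fun t ↦ Real.exp (-ν * t) * f t) s F := by
  simpa only [HasLaplaceTransform, ← mul_assoc, ← Real.exp_add, ← add_mul, ← neg_add] using hf

theorem tsum {ι : Type*} [Countable ι] {f g : ι → ℝ → ℝ} {F G : ι → ℝ} {A : ℝ}
    (hf : ∀ i, HasLaplaceTransform (f i) s (F i)) (hg : ∀ i, HasLaplaceTransform (g i) s (G i))
    (hfg : ∀ i, ∀ t > 0, |f i t| ≤ g i t) (hG : Summable G) (hF : HasSum F A) :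
    HasLaplaceTransform (fun t ↦ ∑' i, f i t) s A := by
  have hnorm (i : ι) : ∫ t in Set.Ioi (0 : ℝ), ‖Real.exp (-s * t) * f i t‖ ≤ G i := by
    rw [← (hg i).2]
    refine setIntegral_mono_on (hf i).1.norm (hg i).1 measurableSet_Ioi fun t ht ↦ ?_
    rw [norm_mul, Real.norm_of_nonneg (Real.exp_pos _).le, Real.norm_eq_abs]
    gcongr
    exact hfg i t ht
  have hsum : Summable fun i ↦ ∫ t in Set.Ioi (0 : ℝ), ‖Real.exp (-s * t) * f i t‖ :=
    .of_nonneg_of_le (fun i ↦ integral_nonneg fun t ↦ norm_nonneg _) hnorm hG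
  simp only [HasLaplaceTransform, ← tsum_mul_left]
  refine ⟨integrable_tsum_of_summable_integral_norm (fun i ↦ (hf i).1) hsum, ?_⟩
  rw [← integral_tsum_of_summable_integral_norm (fun i ↦ (hf i).1) hsum,
    tsum_congr fun i ↦ (hf i).2, hF.tsum_eq]

end HasLaplaceTransform

theorem hasLaplaceTransform_rpow {b s : ℝ} (hb : 0 < b) (hs : 0 < s) :
    HasLaplaceTransform (fun t ↦ t ^ (b - 1)) s (Real.Gamma b / s ^ b) := by
  have hval : ∫ t in Set.Ioi (0 : ℝ), Real.exp (-s * t) * t ^ (b - 1) = Real.Gamma b / s ^ b := by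
    simp only [mul_comm (Real.exp _), neg_mul]
    rw [Real.integral_rpow_mul_exp_neg_mul_Ioi hb hs, Real.div_rpow zero_le_one hs.le,
      Real.one_rpow, one_div_mul_eq_div]
  have hpos : 0 < Real.Gamma b / s ^ b :=
    div_pos (Real.Gamma_pos_of_pos hb) (Real.rpow_pos_of_pos hs b)
  exact ⟨.of_integral_ne_zero (hval.trans_ne hpos.ne'), hval⟩

theorem hasLaplaceTransform_one {s : ℝ} (hs : 0 < s) :
    HasLaplaceTransform (fun _ ↦ 1) s s⁻¹ := by
  simpa using hasLaplaceTransform_rpow one_pos hs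

theorem rpow_mul_exp_neg_le_Gamma {r x : ℝ} (hr : 0 ≤ r) (hx : 1 ≤ x) :
    r ^ (x - 1) * Real.exp (-r) ≤ Real.Gamma x := by
  have hΓ := Real.GammaIntegral_convergent (zero_lt_one.trans_le hx)
  have hsub : Set.Ioi r ⊆ Set.Ioi 0 := Set.Ioi_subset_Ioi hr
  calc r ^ (x - 1) * Real.exp (-r)
      = ∫ t in Set.Ioi r, Real.exp (-t) * r ^ (x - 1) := by
        rw [integral_mul_const, integral_exp_neg_Ioi, mul_comm]
    _ ≤ ∫ t in Set.Ioi r, Real.exp (-t) * t ^ (x - 1) := by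
        refine setIntegral_mono_on ((integrableOn_exp_neg_Ioi r).mul_const _) (hΓ.mono_set hsub)
          measurableSet_Ioi fun t ht ↦ ?_
        gcongr
        exact ht.le
    _ ≤ ∫ t in Set.Ioi 0, Real.exp (-t) * t ^ (x - 1) := by
        refine setIntegral_mono_set hΓ ?_ hsub.eventuallyLE
        filter_upwards [ae_restrict_mem measurableSet_Ioi] with t ht
        exact mul_nonneg (Real.exp_pos _).le (Real.rpow_nonneg ht.le _)
    _ = Real.Gamma x := (Real.Gamma_eq_integral (zero_lt_one.trans_le hx)).symm

theorem summable_ML {a : ℝ} (ha : 0 < a) (b z : ℝ) :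
    Summable fun n : ℕ ↦ z ^ n / Real.Gamma (a * n + b) := by
  set q := |z| + 1
  have hq : 0 < q := by positivity
  -- `r ^ a = |z| + 1` makes the lower bound for `Γ(an+b)` beat `|z| ^ n` geometrically.
  set r := q ^ a⁻¹
  have hr : 0 < r := Real.rpow_pos_of_pos hq _
  have hratio : Summable fun n : ℕ ↦ (|z| / q) ^ n :=
    summable_geometric_of_lt_one (by positivity) ((div_lt_one hq).2 (lt_add_one _))
  have hlarge : ∀ᶠ n : ℕ in Filter.atTop, 1 ≤ a * n + b :=
    ((tendsto_natCast_atTop_atTop.const_mul_atTop ha).atTop_add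
      tendsto_const_nhds).eventually_ge_atTop 1
  refine (hratio.mul_left (r ^ (b - 1) * Real.exp (-r))⁻¹).of_norm_bounded_eventually_nat ?_
  filter_upwards [hlarge] with n hn
  have hpow : r ^ (a * n + b - 1) = q ^ n * r ^ (b - 1) := by
    rw [add_sub_assoc, Real.rpow_add hr, Real.rpow_mul hr.le, Real.rpow_inv_rpow hq.le ha.ne',
      Real.rpow_natCast]
  have hΓ := rpow_mul_exp_neg_le_Gamma hr.le hn
  rw [hpow] at hΓ
  rw [norm_div, norm_pow, Real.norm_eq_abs,
    Real.norm_of_nonneg (Real.Gamma_pos_of_pos (zero_lt_one.trans_le hn)).le]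
  calc |z| ^ n / Real.Gamma (a * n + b)
      ≤ |z| ^ n / (q ^ n * r ^ (b - 1) * Real.exp (-r)) := by gcongr
    _ = (r ^ (b - 1) * Real.exp (-r))⁻¹ * (|z| / q) ^ n := by
        rw [div_pow]
        field_simp

theorem abs_ML_le {a b : ℝ} (ha : 0 < a) (hb : 0 < b) (z : ℝ) : |ML a b z| ≤ ML a b |z| := by
  refine (norm_tsum_le_tsum_norm (summable_ML ha b z).norm).trans_eq (tsum_congr fun n ↦ ?_)
  rw [norm_div, norm_pow, Real.norm_eq_abs,
    Real.norm_of_nonneg (Real.Gamma_pos_of_pos (by positivity)).le]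

theorem rpow_sub_one_mul_ML {t : ℝ} (ht : 0 < t) (a b c : ℝ) :
    t ^ (b - 1) * ML a b (c * t ^ a) =
      ∑' n : ℕ, c ^ n / Real.Gamma (a * n + b) * t ^ (a * n + b - 1) := by
  rw [ML, ← tsum_mul_left]
  refine tsum_congr fun n ↦ ?_
  rw [mul_pow, add_sub_assoc, Real.rpow_add ht, Real.rpow_mul ht.le, Real.rpow_natCast]
  ring

section

variable {a b c s : ℝ}

theorem hasSum_rpow_neg_mul_geometric (hs : 0 < s) (hc : |c| < s ^ a) :
    HasSum (fun n : ℕ ↦ s ^ (-b) * (c / s ^ a) ^ n) (s ^ (a - b) / (s ^ a - c)) := by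
  have hsa : 0 < s ^ a := Real.rpow_pos_of_pos hs a
  have hratio : |c / s ^ a| < 1 := by rwa [abs_div, abs_of_pos hsa, div_lt_one hsa]
  have hval : s ^ (-b) * (1 - c / s ^ a)⁻¹ = s ^ (a - b) / (s ^ a - c) := by
    rw [one_sub_div hsa.ne', inv_div, sub_eq_neg_add a, Real.rpow_add hs, mul_div_assoc]
  exact hval ▸ (hasSum_geometric_of_abs_lt_one hratio).mul_left (s ^ (-b))

theorem hasLaplaceTransform_rpow_mul_ML (ha : 0 < a) (hb : 0 < b) (hs : 0 < s)
    (hc : |c| < s ^ a) :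
    HasLaplaceTransform (fun t ↦ t ^ (b - 1) * ML a b (c * t ^ a)) s
      (s ^ (a - b) / (s ^ a - c)) := by
  have hpos (n : ℕ) : 0 < a * n + b := by positivity
  have hterm (c : ℝ) (n : ℕ) :
      HasLaplaceTransform (fun t ↦ c ^ n / Real.Gamma (a * n + b) * t ^ (a * n + b - 1)) s
        (s ^ (-b) * (c / s ^ a) ^ n) := by
    convert (hasLaplaceTransform_rpow (hpos n) hs).const_mul _ using 1
    have hΓ := (Real.Gamma_pos_of_pos (hpos n)).ne'
    rw [Real.rpow_add hs, Real.rpow_mul hs.le, Real.rpow_natCast, Real.rpow_neg hs.le, div_pow]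
    field_simp
  have habs (n : ℕ) (t : ℝ) (ht : 0 < t) :
      |c ^ n / Real.Gamma (a * n + b) * t ^ (a * n + b - 1)| ≤
        |c| ^ n / Real.Gamma (a * n + b) * t ^ (a * n + b - 1) := by
    rw [abs_mul, abs_div, abs_pow, abs_of_pos (Real.Gamma_pos_of_pos (hpos n)),
      abs_of_pos (Real.rpow_pos_of_pos ht _)]
  have hsum : Summable fun n : ℕ ↦ s ^ (-b) * (|c| / s ^ a) ^ n :=
    (hasSum_rpow_neg_mul_geometric hs (by rwa [abs_abs])).summable
  exact (HasLaplaceTransform.tsum (hterm c) (hterm |c|) habs hsum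
    (hasSum_rpow_neg_mul_geometric hs hc)).congr fun t ht ↦ (rpow_sub_one_mul_ML ht a b c).symm

theorem hasLaplaceTransform_tsum_pow_mul_rpow_mul_ML {ν : ℝ} (ha : 0 < a) (hb : -1 < b)
    (hν : |ν| < s) (hc : |c| < s ^ a) :
    HasLaplaceTransform
      (fun t ↦ ∑' m : ℕ, ν ^ m * t ^ (b + (m : ℝ)) * ML a (b + m + 1) (c * t ^ a)) s
      (s ^ (a - b) / ((s - ν) * (s ^ a - c))) := by
  have hs : 0 < s := (abs_nonneg ν).trans_lt hν
  have hpos (m : ℕ) : 0 < b + m + 1 := by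
    have : (0 : ℝ) ≤ m := m.cast_nonneg
    linarith
  have hterm {ν c : ℝ} (hc : |c| < s ^ a) (m : ℕ) :
      HasLaplaceTransform (fun t ↦ ν ^ m * t ^ (b + (m : ℝ)) * ML a (b + m + 1) (c * t ^ a)) s
        (s ^ (a - b - 1) / (s ^ a - c) * (ν / s) ^ m) := by
    convert (hasLaplaceTransform_rpow_mul_ML ha (hpos m) hs hc).const_mul (ν ^ m) using 1
    · simp only [add_sub_cancel_right, mul_assoc]
    · rw [show a - (b + m + 1) = a - b - 1 - m by ring, Real.rpow_sub hs _ (m : ℝ),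
        Real.rpow_natCast, div_pow]
      ring
  have habs (m : ℕ) (t : ℝ) (ht : 0 < t) :
      |ν ^ m * t ^ (b + (m : ℝ)) * ML a (b + m + 1) (c * t ^ a)| ≤
        |ν| ^ m * t ^ (b + (m : ℝ)) * ML a (b + m + 1) (|c| * t ^ a) := by
    rw [abs_mul, abs_mul, abs_pow, abs_of_pos (Real.rpow_pos_of_pos ht (b + m))]
    gcongr
    simpa only [abs_mul, abs_of_pos (Real.rpow_pos_of_pos ht a)] using
      abs_ML_le ha (hpos m) (c * t ^ a)
  have hratio : |ν / s| < 1 := by rwa [abs_div, abs_of_pos hs, div_lt_one hs]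
  have hsum : Summable fun m : ℕ ↦ s ^ (a - b - 1) / (s ^ a - |c|) * (|ν| / s) ^ m :=
    (summable_geometric_of_lt_one (by positivity) ((div_lt_one hs).2 hν)).mul_left _
  convert HasLaplaceTransform.tsum (hterm hc) (hterm (by rwa [abs_abs])) habs hsum
    ((hasSum_geometric_of_abs_lt_one hratio).mul_left _) using 1
  rw [one_sub_div hs.ne', inv_div, Real.rpow_sub_one hs.ne']
  field_simp

end

theorem laplace_transform_Phi_general {β ν γ s : ℝ} (hβ : 0 < β) (hν : 0 ≤ ν)
    (f : ℝ → ℝ) (hf : ∀ s : ℝ, f s = (s + ν) ^ β - ν ^ β)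
    (hs : 0 < s) (hdom : |ν ^ β - γ| < (s + ν) ^ β) :
    HasLaplaceTransform (Phi β ν γ) s (f s / (s * (γ + f s))) := by
  have hν' : |ν| < s + ν := by rwa [abs_of_nonneg hν, lt_add_iff_pos_left]
  have hseries :=
    hasLaplaceTransform_tsum_pow_mul_rpow_mul_ML hβ (neg_one_lt_zero.trans hβ) hν' hdom
  convert (hasLaplaceTransform_one hs).sub (hseries.exp_neg_mul.const_mul γ) using 1
  · funext t
    simp only [Phi, mul_assoc]
  · have hden : (s + ν) ^ β - (ν ^ β - γ) ≠ 0 := (sub_pos.2 (lt_of_abs_lt hdom)).ne'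
    rw [hf, sub_self, Real.rpow_zero, add_sub_cancel_right,
      show γ + ((s + ν) ^ β - ν ^ β) = (s + ν) ^ β - (ν ^ β - γ) by ring]
    field_simp
    ring

/-- For `β ∈ (0,1)`, `ν > 0`, `γ > 0`, `f(s) = (s+ν)^β − ν^β`, and every
`s > 0` with `(s+ν)^β > |ν^β − γ|`, one has
`∫_0^∞ e^{−st} Φ_γ(t) dt = f(s)/(s(γ + f(s)))`. -/
theorem laplace_transform_Phi
    (β ν γ : ℝ) (hβ : β ∈ Set.Ioo (0 : ℝ) 1) (hν : 0 < ν) (hγ : 0 < γ)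
    (f : ℝ → ℝ) (hf : ∀ s : ℝ, f s = (s + ν) ^ β - ν ^ β)
    (s : ℝ) (hs : 0 < s) (hdom : |ν ^ β - γ| < (s + ν) ^ β) :
    ∫ t in Set.Ioi (0 : ℝ), Real.exp (-s * t) * Phi β ν γ t =
      f s / (s * (γ + f s)) := by
  exact (laplace_transform_Phi_general hβ.1 hν.le f hf hs hdom).2
end
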